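/- arXiv:2105.02122 — 3 statements merged into one kernel-verified Lean document; each statement's English description precedes it below -/
import Mathlib

section
/- Let α ∈ (0,1) and λ > 0. Then the function t ↦ E_α(−λ t^α) is positive and decreasing on [0, ∞), and satisfies E_α(−λ t^α) ≤ 1 for all t ≥ 0; that is, for all 0 ≤ s ≤ t one has 0 < E_α(−λ t^α) ≤ E_α(−λ s^α) ≤ 1. -/
/-- The Mittag-Leffler function `E_α(x) = ∑_{k=0}^∞ x^k / Γ(αk + 1)`. -/
noncomputable def mittagLeffler (α x : ℝ) : ℝ :=
  ∑' k : ℕ, x ^ k / Real.Gamma (α * k + 1)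

open MeasureTheory Set Filter Topology

noncomputable def mlP (α c y : ℝ) : ℝ := ∑' k : ℕ, y ^ k / Real.Gamma (α * k + c)

lemma ml_gamma_ratio {α : ℝ} (h0 : 0 < α) (h1 : α < 1) {y : ℝ} (hy : 0 < y) :
    Real.Gamma y / Real.Gamma (y + α) ≤ (y + α) ^ (1 - α) / y := by
  have hG : 0 < Real.Gamma (y + α) := Real.Gamma_pos_of_pos (by linarith)
  have h := Real.Gamma_mul_add_mul_le_rpow_Gamma_mul_rpow_Gamma (s := y + α) (t := y + α + 1)
    (a := α) (b := 1 - α) (by linarith) (by linarith) h0 (by linarith) (by ring)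
  rw [show α * (y + α) + (1 - α) * (y + α + 1) = y + 1 by ring,
    Real.Gamma_add_one hy.ne', Real.Gamma_add_one (by linarith : y + α ≠ 0),
    Real.mul_rpow (by linarith) hG.le] at h
  have h2 : Real.Gamma (y + α) ^ α * ((y + α) ^ (1 - α) * Real.Gamma (y + α) ^ (1 - α))
      = (y + α) ^ (1 - α) * Real.Gamma (y + α) := by
    rw [mul_left_comm, ← Real.rpow_add hG]; simp
  rw [h2] at h
  rw [div_le_div_iff₀ hG hy]
  linarith

lemma ml_summable {α : ℝ} (h0 : 0 < α) (h1 : α < 1) {c : ℝ} (hc : 0 < c) (x : ℝ) :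
    Summable (fun k : ℕ => x ^ k / Real.Gamma (α * k + c)) := by
  rcases eq_or_ne x 0 with rfl | hx
  · refine summable_of_ne_finset_zero (s := {0}) ?_
    intro b hb
    simp at hb
    simp [hb]
  have hpos : ∀ k : ℕ, 0 < α * k + c := fun k => by positivity
  have hG : ∀ k : ℕ, 0 < Real.Gamma (α * k + c) := fun k => Real.Gamma_pos_of_pos (hpos k)
  refine summable_of_ratio_test_tendsto_lt_one (l := 0) zero_lt_one ?_ ?_
  · exact Eventually.of_forall fun k => div_ne_zero (pow_ne_zero _ hx) (hG k).ne'
  have hlin : Tendsto (fun k : ℕ => α * (k : ℝ) + c) atTop atTop :=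
    tendsto_atTop_add_const_right _ _ (tendsto_natCast_atTop_atTop.const_mul_atTop h0)
  have hB : Tendsto (fun y : ℝ => |x| * (2 * y ^ (-α))) atTop (𝓝 0) := by
    have := ((tendsto_rpow_neg_atTop h0).const_mul 2).const_mul |x|
    simpa using this
  refine squeeze_zero' (Eventually.of_forall fun k => by positivity) ?_ (hB.comp hlin)
  filter_upwards [hlin.eventually_ge_atTop 1] with k hk
  have hr := ml_gamma_ratio h0 h1 (hpos k)
  have hk2 := hG (k+1)
  have e1 : α * ((k + 1 : ℕ) : ℝ) + c = α * k + c + α := by push_cast; ring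
  rw [e1] at hk2 ⊢
  have e2 : ‖x ^ (k + 1) / Real.Gamma (α * k + c + α)‖ / ‖x ^ k / Real.Gamma (α * k + c)‖
      = |x| * (Real.Gamma (α * k + c) / Real.Gamma (α * k + c + α)) := by
    rw [norm_div, norm_div, Real.norm_of_nonneg hk2.le, Real.norm_of_nonneg (hG k).le,
      norm_pow, norm_pow, Real.norm_eq_abs]
    have := abs_pos.2 hx
    have := hG k
    rw [pow_succ]
    field_simp
  rw [e2]
  simp only [Function.comp]
  refine mul_le_mul_of_nonneg_left (hr.trans ?_) (abs_nonneg _)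
  set y := α * (k:ℝ) + c
  have hy : 0 < y := hpos k
  calc (y + α) ^ (1 - α) / y ≤ (2 * y) ^ (1 - α) / y := by
        gcongr <;> linarith
    _ = 2 ^ (1 - α) * y ^ (-α) := by
        rw [Real.mul_rpow (by norm_num) hy.le, show -α = (1 - α) - 1 by ring,
          Real.rpow_sub_one hy.ne']
        ring
    _ ≤ 2 * y ^ (-α) := by
        gcongr
        calc (2:ℝ) ^ (1 - α) ≤ 2 ^ (1:ℝ) := Real.rpow_le_rpow_of_exponent_le (by norm_num) (by linarith)
          _ = 2 := by simp

lemma ml_continuous {α : ℝ} (h0 : 0 < α) (h1 : α < 1) {c : ℝ} (hc : 0 < c) :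
    Continuous (mlP α c) := by
  have hG : ∀ k : ℕ, 0 < Real.Gamma (α * k + c) :=
    fun k => Real.Gamma_pos_of_pos (by positivity)
  rw [continuous_iff_continuousAt]
  intro y
  have : ContinuousOn (mlP α c) (Metric.ball 0 (|y| + 1)) := by
    unfold mlP
    refine continuousOn_tsum (fun k => by fun_prop) (ml_summable h0 h1 hc (|y| + 1)) ?_
    intro k z hz
    rw [norm_div, norm_pow, Real.norm_of_nonneg (hG k).le]
    have : ‖z‖ ≤ |y| + 1 := by simpa using (mem_ball_zero_iff.1 hz).le
    have := (hG k).le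
    gcongr
  exact this.continuousAt (Metric.isOpen_ball.mem_nhds (by simp))

lemma ml_coef {α : ℝ} (h0 : 0 < α) (k : ℕ) :
    ((k:ℝ) + 1) / Real.Gamma (α * (k + 1 : ℕ) + 1) = 1 / α / Real.Gamma (α * k + α) := by
  have e : α * ((k + 1 : ℕ):ℝ) = α * k + α := by push_cast; ring
  have hp : 0 < α * (k:ℝ) + α := by positivity
  rw [e, Real.Gamma_add_one hp.ne']
  have := Real.Gamma_pos_of_pos hp
  field_simp

lemma ml_hasDeriv {α : ℝ} (h0 : 0 < α) (h1 : α < 1) (y : ℝ) :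
    HasDerivAt (mlP α 1) (mlP α α y / α) y := by
  have hG : ∀ k : ℕ, 0 < Real.Gamma (α * k + α) :=
    fun k => Real.Gamma_pos_of_pos (by positivity)
  set g' : ℕ → ℝ → ℝ := fun k z => (k * z ^ (k - 1)) / Real.Gamma (α * k + 1) with hg'
  have hs : ∀ r : ℝ, ∀ k : ℕ, g' (k + 1) r = (1 / α) * (r ^ k / Real.Gamma (α * k + α)) := by
    intro r k
    have := ml_coef h0 k
    simp only [hg', Nat.add_sub_cancel]
    push_cast at this ⊢
    rw [mul_comm, mul_div_assoc, this]; ring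
  have hsum : ∀ r : ℝ, Summable (fun k => g' k r) := by
    intro r
    rw [← summable_nat_add_iff 1]
    simp_rw [hs]
    exact (ml_summable h0 h1 h0 r).mul_left _
  have key := hasDerivAt_tsum_of_isPreconnected (g := fun (k : ℕ) (z : ℝ) => z ^ k / Real.Gamma (α * k + 1))
    (g' := g') (t := Metric.ball (0:ℝ) (|y| + 1)) (y := y) (y₀ := y) (hsum (|y| + 1))
    Metric.isOpen_ball (convex_ball _ _).isPreconnected
    (fun k z _ => (hasDerivAt_pow k z).div_const _) ?_ (by simp)
    (ml_summable h0 h1 one_pos y) (by simp)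
  · convert! key using 1
    rw [(hsum y).tsum_eq_zero_add]
    simp_rw [hs]
    rw [tsum_mul_left]
    simp [hg', mlP]; ring
  · intro k z hz
    have hk : 0 < Real.Gamma (α * k + 1) := Real.Gamma_pos_of_pos (by positivity)
    simp only [hg']
    rw [norm_div, norm_mul, norm_pow, Real.norm_of_nonneg hk.le, Real.norm_of_nonneg (by positivity)]
    have : ‖z‖ ≤ |y| + 1 := by simpa using (mem_ball_zero_iff.1 hz).le
    gcongr

lemma ml_pos_of_series (F : ℕ → ℝ → ℝ) (S : ℝ → ℝ)
    (hint : ∀ k, IntegrableOn (F k) (Ioo 0 1))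
    (hsum : Summable fun k => ∫ s in Ioo (0:ℝ) 1, ‖F k s‖)
    (hcont : ContinuousOn S (Ioo 0 1))
    (hSF : ∀ s ∈ Ioo (0:ℝ) 1, HasSum (fun k => F k s) (S s))
    (hpos : ∀ s ∈ Ioo (0:ℝ) 1, 0 < S s) :
    0 < ∑' k, ∫ s in Ioo (0:ℝ) 1, F k s := by
  rw [integral_tsum_of_summable_integral_norm hint hsum]
  rw [setIntegral_congr_fun (g := S) measurableSet_Ioo (fun s hs => (hSF s hs).tsum_eq)]
  have hm : AEStronglyMeasurable S (volume.restrict (Ioo (0:ℝ) 1)) :=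
    hcont.aestronglyMeasurable measurableSet_Ioo
  have hSint : IntegrableOn S (Ioo 0 1) := by
    refine ⟨hm, ?_⟩
    rw [hasFiniteIntegral_iff_enorm]
    have h1 : ∫⁻ s in Ioo (0:ℝ) 1, ‖S s‖ₑ ≤ ∫⁻ s in Ioo (0:ℝ) 1, ∑' k, ‖F k s‖ₑ := by
      refine setLIntegral_mono' measurableSet_Ioo fun s hs => ?_
      rw [← (hSF s hs).tsum_eq]
      exact enorm_tsum_le_tsum_enorm
    refine h1.trans_lt ?_
    rw [lintegral_tsum (fun k => (hint k).1.enorm)]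
    have (i : ℕ) : ∫⁻ a in Ioo (0:ℝ) 1, ‖F i a‖ₑ = ‖∫ a in Ioo (0:ℝ) 1, ‖F i a‖‖ₑ := by
      simp only [enorm]
      rw [lintegral_coe_eq_integral _ (hint i).norm, ENNReal.coe_nnreal_eq, coe_nnnorm,
        Real.norm_of_nonneg (integral_nonneg (fun a ↦ norm_nonneg (F i a)))]
      simp only [coe_nnnorm]
    rw [funext this]
    exact (ENNReal.tsum_coe_ne_top_iff_summable.2 <| NNReal.summable_coe.1 hsum.abs).lt_top
  rw [← integral_Ioc_eq_integral_Ioo, ← intervalIntegral.integral_of_le zero_le_one]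
  refine intervalIntegral.intervalIntegral_pos_of_pos_on ?_ hpos one_pos
  rw [intervalIntegrable_iff_integrableOn_Ioo_of_le zero_le_one]
  exact hSint

lemma ml_beta {u v : ℝ} (hu : 0 < u) (hv : 0 < v) :
    IntegrableOn (fun x : ℝ => x ^ (u - 1) * (1 - x) ^ (v - 1)) (Ioo 0 1) ∧
    ∫ x in Ioo (0:ℝ) 1, x ^ (u - 1) * (1 - x) ^ (v - 1)
      = Real.Gamma u * Real.Gamma v / Real.Gamma (u + v) := by
  have hc := Complex.betaIntegral_convergent (u := u) (v := v) (by simpa) (by simpa)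
  rw [intervalIntegrable_iff_integrableOn_Ioo_of_le zero_le_one] at hc
  have e : ∀ x ∈ Ioo (0:ℝ) 1, RCLike.re ((x : ℂ) ^ ((u:ℂ) - 1) * (1 - (x : ℂ)) ^ ((v:ℂ) - 1)) =
      x ^ (u - 1) * (1 - x) ^ (v - 1) := by
    intro x ⟨hx1, hx2⟩
    norm_cast
    rw [← Complex.ofReal_cpow, ← Complex.ofReal_cpow, RCLike.re_to_complex,
      Complex.re_mul_ofReal, Complex.ofReal_re]
    all_goals linarith
  constructor
  · exact IntegrableOn.congr_fun (Integrable.re hc) e measurableSet_Ioo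
  · have := ProbabilityTheory.beta_eq_betaIntegralReal u v hu hv
    rw [ProbabilityTheory.beta] at this
    rw [this, Complex.betaIntegral, intervalIntegral.integral_of_le (by norm_num),
      integral_Ioc_eq_integral_Ioo, ← RCLike.re_to_complex, ← integral_re hc]
    exact (setIntegral_congr_fun measurableSet_Ioo e).symm

lemma ml_bern {γ : ℝ} (hγ : 0 < γ) {s : ℝ} (hs : s ∈ Ioo (0:ℝ) 1) :
    0 ≤ 1 - s ^ γ ∧ 1 - s ^ γ ≤ max γ 1 * (1 - s) := by
  constructor
  · linarith [Real.rpow_le_one hs.1.le hs.2.le hγ.le]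
  · have h1 : s ^ (max γ 1) ≤ s ^ γ :=
      Real.rpow_le_rpow_of_exponent_ge hs.1 hs.2.le (le_max_left _ _)
    have h2 := one_add_mul_self_le_rpow_one_add (s := s - 1) (by linarith [hs.1]) (le_max_right γ 1)
    rw [show 1 + (s - 1) = s by ring] at h2
    linarith

lemma ml_reg {α : ℝ} (h0 : 0 < α) (h1 : α < 1) {γ : ℝ} (hγ : 0 < γ) :
    IntegrableOn (fun s : ℝ => (1 - s ^ γ) * (1 - s) ^ (-α - 1)) (Ioo 0 1) ∧
    ∫ s in Ioo (0:ℝ) 1, (1 - s ^ γ) * (1 - s) ^ (-α - 1)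
      = γ / α * (Real.Gamma γ * Real.Gamma (1 - α) / Real.Gamma (γ + (1 - α))) - 1 / α := by
  obtain ⟨hb1, hb2⟩ := ml_beta hγ (sub_pos.2 h1)
  have ea : 1 - α - 1 = -α := by ring
  rw [ea] at hb1 hb2
  obtain ⟨hc1, -⟩ := ml_beta one_pos (sub_pos.2 h1)
  rw [ea] at hc1
  have hI : IntegrableOn (fun s : ℝ => (1 - s ^ γ) * (1 - s) ^ (-α - 1)) (Ioo 0 1) := by
    refine Integrable.mono' (hc1.const_mul (max γ 1)) ?_ ?_
    · exact (Measurable.aestronglyMeasurable (by fun_prop))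
    · refine ae_restrict_of_forall_mem measurableSet_Ioo fun s hs => ?_
      obtain ⟨hp, hq⟩ := ml_bern hγ hs
      have hs1 : 0 < 1 - s := by linarith [hs.2]
      rw [Real.norm_of_nonneg (by positivity)]
      simp only [sub_self, Real.rpow_zero, one_mul]
      calc (1 - s ^ γ) * (1 - s) ^ (-α - 1) ≤ (max γ 1 * (1 - s)) * (1 - s) ^ (-α - 1) := by
            gcongr
        _ = max γ 1 * (1 - s) ^ (-α) := by
            rw [Real.rpow_sub_one hs1.ne']; field_simp
  refine ⟨hI, ?_⟩
  have hder : ∀ s ∈ Ioo (0:ℝ) 1, HasDerivAt (fun s : ℝ => -(1 / α) * ((1 - s ^ γ) * (1 - s) ^ (-α)))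
      (γ / α * (s ^ (γ - 1) * (1 - s) ^ (-α)) - (1 - s ^ γ) * (1 - s) ^ (-α - 1)) s := by
    intro s hs
    have hs1 : 0 < 1 - s := by linarith [hs.2]
    have d1 : HasDerivAt (fun s : ℝ => 1 - s ^ γ) (-(γ * s ^ (γ - 1))) s :=
      (Real.hasDerivAt_rpow_const (Or.inl hs.1.ne')).const_sub 1
    have d2 : HasDerivAt (fun s : ℝ => (1 - s) ^ (-α)) (-1 * (-α) * (1 - s) ^ (-α - 1)) s :=
      ((hasDerivAt_id s).const_sub 1).rpow_const (Or.inl hs1.ne')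
    convert! (d1.mul d2).const_mul (-(1 / α)) using 1
    field_simp
    ring
  have hint : IntegrableOn (fun s : ℝ => γ / α * (s ^ (γ - 1) * (1 - s) ^ (-α))
      - (1 - s ^ γ) * (1 - s) ^ (-α - 1)) (Ioo 0 1) := (hb1.const_mul _).sub hI
  have hft := intervalIntegral.integral_eq_sub_of_hasDerivAt_of_tendsto (fa := -(1 / α)) (fb := 0)
    one_pos hder ((intervalIntegrable_iff_integrableOn_Ioo_of_le zero_le_one).2 hint) ?_ ?_
  · rw [intervalIntegral.integral_of_le zero_le_one, integral_Ioc_eq_integral_Ioo,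
      integral_sub (hb1.const_mul _) hI, integral_const_mul, hb2] at hft
    linarith
  · have : ContinuousAt (fun s : ℝ => -(1 / α) * ((1 - s ^ γ) * (1 - s) ^ (-α))) 0 := by
      refine continuousAt_const.mul ((continuousAt_const.sub ?_).mul ?_)
      · exact Real.continuousAt_rpow_const _ _ (Or.inr hγ.le)
      · exact (continuousAt_const.sub continuousAt_id).rpow_const (Or.inl (by simp))
    have h := this.tendsto
    simp [Real.zero_rpow hγ.ne'] at h
    simpa using h.mono_left nhdsWithin_le_nhds
  · have hz : Tendsto (fun s : ℝ => max γ 1 * (1 - s) ^ (1 - α)) (𝓝[<] 1) (𝓝 0) := by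
      have : ContinuousAt (fun s : ℝ => max γ 1 * (1 - s) ^ (1 - α)) 1 := by
        refine continuousAt_const.mul ?_
        exact (continuousAt_const.sub continuousAt_id).rpow_const (Or.inr (by linarith))
      have h := this.tendsto
      simp [Real.zero_rpow (sub_pos.2 h1).ne'] at h
      exact h.mono_left nhdsWithin_le_nhds
    have : Tendsto (fun s : ℝ => (1 - s ^ γ) * (1 - s) ^ (-α)) (𝓝[<] 1) (𝓝 0) := by
      refine squeeze_zero' ?_ ?_ hz
      all_goals
        filter_upwards [Ioo_mem_nhdsLT (zero_lt_one (α := ℝ))] with s hs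
        obtain ⟨hp, hq⟩ := ml_bern hγ hs
        have hs1 : 0 < 1 - s := by linarith [hs.2]
      · positivity
      · calc (1 - s ^ γ) * (1 - s) ^ (-α) ≤ (max γ 1 * (1 - s)) * (1 - s) ^ (-α) := by gcongr
          _ = max γ 1 * (1 - s) ^ (1 - α) := by
            rw [sub_eq_add_neg 1 α, Real.rpow_add hs1, Real.rpow_one]; ring
    simpa using this.const_mul (-(1 / α))

lemma ml_gpos {α : ℝ} (h0 : 0 < α) (k : ℕ) : 0 < Real.Gamma (α * k + α) :=
  Real.Gamma_pos_of_pos (by positivity)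

/-- The beta-type terms. -/
lemma ml_termA {α : ℝ} (h0 : 0 < α) (h1 : α < 1) (y : ℝ) (k : ℕ) :
    IntegrableOn (fun s : ℝ => y ^ k / Real.Gamma (α * k + α) *
      (s ^ (α * k + α - 1) * (1 - s) ^ (-α))) (Ioo 0 1) ∧
    ∫ s in Ioo (0:ℝ) 1, y ^ k / Real.Gamma (α * k + α) *
      (s ^ (α * k + α - 1) * (1 - s) ^ (-α)) =
      Real.Gamma (1 - α) * (y ^ k / Real.Gamma (α * k + 1)) ∧
    ∫ s in Ioo (0:ℝ) 1, ‖y ^ k / Real.Gamma (α * k + α) *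
      (s ^ (α * k + α - 1) * (1 - s) ^ (-α))‖ =
      Real.Gamma (1 - α) * (|y| ^ k / Real.Gamma (α * k + 1)) := by
  have hg : 0 < α * (k:ℝ) + α := by positivity
  have hG := ml_gpos h0 k
  obtain ⟨hb1, hb2⟩ := ml_beta hg (sub_pos.2 h1)
  rw [show 1 - α - 1 = -α by ring] at hb1 hb2
  rw [show α * (k:ℝ) + α + (1 - α) = α * k + 1 by ring] at hb2
  have main : ∀ z : ℝ, ∫ s in Ioo (0:ℝ) 1, z ^ k / Real.Gamma (α * k + α) *
      (s ^ (α * k + α - 1) * (1 - s) ^ (-α)) =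
      Real.Gamma (1 - α) * (z ^ k / Real.Gamma (α * k + 1)) := by
    intro z
    rw [integral_const_mul, hb2]
    field_simp
  refine ⟨hb1.const_mul _, main y, ?_⟩
  rw [← main]
  refine setIntegral_congr_fun measurableSet_Ioo fun s hs => ?_
  have hs1 : 0 < 1 - s := by linarith [hs.2]
  have hs0 := hs.1
  rw [norm_mul, norm_div, norm_pow, Real.norm_of_nonneg hG.le, Real.norm_eq_abs,
    Real.norm_of_nonneg (by positivity)]

/-- The regularised terms. -/
lemma ml_termD {α : ℝ} (h0 : 0 < α) (h1 : α < 1) (y : ℝ) (k : ℕ) :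
    IntegrableOn (fun s : ℝ => y ^ k / Real.Gamma (α * k + α) *
      ((1 - s ^ (α * k + α)) * (1 - s) ^ (-α - 1))) (Ioo 0 1) ∧
    ∫ s in Ioo (0:ℝ) 1, y ^ k / Real.Gamma (α * k + α) *
      ((1 - s ^ (α * k + α)) * (1 - s) ^ (-α - 1)) =
      Real.Gamma (1 - α) * ((k + 1) * y ^ k / Real.Gamma (α * k + 1))
        - 1 / α * (y ^ k / Real.Gamma (α * k + α)) ∧
    ∫ s in Ioo (0:ℝ) 1, ‖y ^ k / Real.Gamma (α * k + α) *
      ((1 - s ^ (α * k + α)) * (1 - s) ^ (-α - 1))‖ =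
      Real.Gamma (1 - α) * ((k + 1) * |y| ^ k / Real.Gamma (α * k + 1))
        - 1 / α * (|y| ^ k / Real.Gamma (α * k + α)) := by
  have hg : 0 < α * (k:ℝ) + α := by positivity
  have hG := ml_gpos h0 k
  obtain ⟨hb1, hb2⟩ := ml_reg h0 h1 hg
  rw [show α * (k:ℝ) + α + (1 - α) = α * k + 1 by ring] at hb2
  have hG1 : 0 < Real.Gamma (α * k + 1) := Real.Gamma_pos_of_pos (by positivity)
  have main : ∀ z : ℝ, ∫ s in Ioo (0:ℝ) 1, z ^ k / Real.Gamma (α * k + α) *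
      ((1 - s ^ (α * k + α)) * (1 - s) ^ (-α - 1)) =
      Real.Gamma (1 - α) * ((k + 1) * z ^ k / Real.Gamma (α * k + 1))
        - 1 / α * (z ^ k / Real.Gamma (α * k + α)) := by
    intro z
    rw [integral_const_mul, hb2]
    field_simp
  refine ⟨hb1.const_mul _, main y, ?_⟩
  rw [← main]
  refine setIntegral_congr_fun measurableSet_Ioo fun s hs => ?_
  have hs1 : 0 < 1 - s := by linarith [hs.2]
  have hs0 := (ml_bern hg hs).1
  rw [norm_mul, norm_div, norm_pow, Real.norm_of_nonneg hG.le, Real.norm_eq_abs,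
    Real.norm_of_nonneg (by positivity)]

lemma ml_hasSum {α : ℝ} (h0 : 0 < α) (h1 : α < 1) {c : ℝ} (hc : 0 < c) (y : ℝ) :
    HasSum (fun k : ℕ => y ^ k / Real.Gamma (α * k + c)) (mlP α c y) :=
  (ml_summable h0 h1 hc y).hasSum

lemma ml_pointwise {α : ℝ} (h0 : 0 < α) (h1 : α < 1) (y : ℝ) {s : ℝ} (hs : 0 < s) :
    HasSum (fun k : ℕ => y ^ k / Real.Gamma (α * k + α) * s ^ (α * k + α - 1))
      (s ^ (α - 1) * mlP α α (y * s ^ α)) := by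
  convert! (ml_hasSum h0 h1 h0 (y * s ^ α)).mul_left (s ^ (α - 1)) using 1
  ext k
  rw [show α * (k:ℝ) + α - 1 = (α - 1) + α * k by ring, Real.rpow_add hs, Real.rpow_mul hs.le,
    Real.rpow_natCast, mul_pow]
  ring

lemma ml_E_pos {α : ℝ} (h0 : 0 < α) (h1 : α < 1) (hφ : ∀ y ≤ 0, 0 < mlP α α y) {y : ℝ}
    (hy : y ≤ 0) : 0 < mlP α 1 y := by
  have hΓ : 0 < Real.Gamma (1 - α) := Real.Gamma_pos_of_pos (by linarith)
  have key := ml_pos_of_series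
    (fun k s => y ^ k / Real.Gamma (α * k + α) * (s ^ (α * k + α - 1) * (1 - s) ^ (-α)))
    (fun s => s ^ (α - 1) * mlP α α (y * s ^ α) * (1 - s) ^ (-α))
    (fun k => (ml_termA h0 h1 y k).1) ?_ ?_ ?_ ?_
  · simp_rw [(ml_termA h0 h1 y _).2.1] at key
    rw [tsum_mul_left] at key
    exact (pos_iff_pos_of_mul_pos key).1 hΓ
  · simp_rw [(ml_termA h0 h1 y _).2.2]
    exact (ml_summable h0 h1 one_pos _).mul_left _
  · intro s hs
    have := (ml_continuous h0 h1 h0).continuousAt (x := y * s ^ α)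
    have hs1 : 1 - s ≠ 0 := by linarith [hs.2]
    refine ContinuousAt.continuousWithinAt ?_
    have c1 : ContinuousAt (fun s : ℝ => s ^ (α - 1)) s :=
      Real.continuousAt_rpow_const _ _ (Or.inl hs.1.ne')
    have c2 : ContinuousAt (fun s : ℝ => y * s ^ α) s :=
      continuousAt_const.mul (Real.continuousAt_rpow_const _ _ (Or.inl hs.1.ne'))
    have c3 : ContinuousAt (fun s : ℝ => (1 - s) ^ (-α)) s :=
      (continuousAt_const.sub continuousAt_id).rpow_const (Or.inl hs1)
    exact (c1.mul (ContinuousAt.comp this c2)).mul c3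
  · intro s hs
    convert! (ml_pointwise h0 h1 y hs.1).mul_right ((1 - s) ^ (-α)) using 1
    ext k; ring
  · intro s hs
    have hs1 : 0 < 1 - s := by linarith [hs.2]
    have hs0 := hs.1
    have := hφ (y * s ^ α) (mul_nonpos_of_nonpos_of_nonneg hy (by positivity))
    positivity

lemma ml_sum_k {α : ℝ} (h0 : 0 < α) (h1 : α < 1) (y : ℝ) :
    HasSum (fun k : ℕ => k * y ^ k / Real.Gamma (α * k + 1)) (y / α * mlP α α y) := by
  rw [← hasSum_nat_add_iff' 1]
  simp only [Finset.range_one, Finset.sum_singleton, Nat.cast_zero, zero_mul, zero_div, sub_zero]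
  convert! (ml_hasSum h0 h1 h0 y).mul_left (y / α) using 1
  ext k
  have := ml_coef h0 k
  push_cast at this ⊢
  rw [mul_comm, mul_div_assoc, this, pow_succ]
  ring

lemma ml_phi_step {α : ℝ} (h0 : 0 < α) (h1 : α < 1) {y : ℝ} (hy : y < 0)
    (hlt : ∀ z, y < z → z ≤ 0 → 0 < mlP α α z) : 0 < mlP α α y := by
  by_contra hneg
  push Not at hneg
  have hΓ : 0 < Real.Gamma (1 - α) := Real.Gamma_pos_of_pos (by linarith)
  have key := ml_pos_of_series
    (fun k s => y ^ k / Real.Gamma (α * k + α) * (s ^ (α * k + α - 1) * (1 - s) ^ (-α)) -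
      y ^ k / Real.Gamma (α * k + α) * ((1 - s ^ (α * k + α)) * (1 - s) ^ (-α - 1)))
    (fun s => (s ^ (α - 1) * mlP α α (y * s ^ α) - mlP α α y) * (1 - s) ^ (-α - 1))
    (fun k => (ml_termA h0 h1 y k).1.sub (ml_termD h0 h1 y k).1) ?_ ?_ ?_ ?_
  · simp_rw [fun k => integral_sub (ml_termA h0 h1 y k).1 (ml_termD h0 h1 y k).1,
      (ml_termA h0 h1 y _).2.1, (ml_termD h0 h1 y _).2.1] at key
    have hs : HasSum (fun k : ℕ => 1 / α * (y ^ k / Real.Gamma (α * k + α)) -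
        Real.Gamma (1 - α) * (k * y ^ k / Real.Gamma (α * k + 1)))
        (1 / α * mlP α α y - Real.Gamma (1 - α) * (y / α * mlP α α y)) :=
      ((ml_hasSum h0 h1 h0 y).mul_left _).sub ((ml_sum_k h0 h1 y).mul_left _)
    rw [tsum_congr (g := fun k : ℕ => 1 / α * (y ^ k / Real.Gamma (α * k + α)) -
        Real.Gamma (1 - α) * (k * y ^ k / Real.Gamma (α * k + 1))) (fun k => by ring),
      hs.tsum_eq] at key
    have e : 1 / α * mlP α α y - Real.Gamma (1 - α) * (y / α * mlP α α y)
      = mlP α α y * ((1 + Real.Gamma (1 - α) * (-y)) / α) := by ring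
    rw [e] at key
    have : 0 ≤ (1 + Real.Gamma (1 - α) * (-y)) / α := by
      have : 0 < -y := by linarith
      positivity
    exact absurd key (not_lt.2 (mul_nonpos_of_nonpos_of_nonneg hneg this))
  · refine Summable.of_nonneg_of_le (f := fun k : ℕ =>
        Real.Gamma (1 - α) * (|y| ^ k / Real.Gamma (α * k + 1)) +
        (Real.Gamma (1 - α) * ((k + 1) * |y| ^ k / Real.Gamma (α * k + 1))
        - 1 / α * (|y| ^ k / Real.Gamma (α * k + α))))
      (fun k => integral_nonneg fun _ => norm_nonneg _) (fun k => ?_) ?_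
    · obtain ⟨a1, -, a3⟩ := ml_termA h0 h1 y k
      obtain ⟨d1, -, d3⟩ := ml_termD h0 h1 y k
      rw [← a3, ← d3, ← integral_add a1.norm d1.norm]
      exact integral_mono (a1.sub d1).norm (a1.norm.add d1.norm) (fun s => norm_sub_le _ _)
    · have s1 := (ml_summable h0 h1 one_pos |y|).mul_left (Real.Gamma (1 - α))
      have s2 := (ml_sum_k h0 h1 |y|).summable.mul_left (Real.Gamma (1 - α))
      have s3 := (ml_summable h0 h1 h0 |y|).mul_left (1 / α)
      refine (s1.add ((s2.add s1).sub s3)).congr fun k => ?_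
      ring
  · intro s hs
    have := (ml_continuous h0 h1 h0).continuousAt (x := y * s ^ α)
    have hs1 : 1 - s ≠ 0 := by linarith [hs.2]
    refine ContinuousAt.continuousWithinAt ?_
    have c1 : ContinuousAt (fun s : ℝ => s ^ (α - 1)) s :=
      Real.continuousAt_rpow_const _ _ (Or.inl hs.1.ne')
    have c2 : ContinuousAt (fun s : ℝ => y * s ^ α) s :=
      continuousAt_const.mul (Real.continuousAt_rpow_const _ _ (Or.inl hs.1.ne'))
    have c3 : ContinuousAt (fun s : ℝ => (1 - s) ^ (-α - 1)) s :=
      (continuousAt_const.sub continuousAt_id).rpow_const (Or.inl hs1)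
    exact ((c1.mul (ContinuousAt.comp this c2)).sub continuousAt_const).mul c3
  · intro s hs
    have hs1 : 0 < 1 - s := by linarith [hs.2]
    convert! ((ml_pointwise h0 h1 y hs.1).sub (ml_hasSum h0 h1 h0 y)).mul_right
      ((1 - s) ^ (-α - 1)) using 1
    ext k
    have e1 : (1 - s) ^ (-α) = (1 - s) ^ (-α - 1) * (1 - s) := by
      rw [Real.rpow_sub_one hs1.ne']; field_simp
    have e2 : s ^ (α * k + α) = s ^ (α * k + α - 1) * s := by
      rw [Real.rpow_sub_one hs.1.ne']; field_simp [hs.1.ne']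
    rw [e1, e2]
    ring
  · intro s hs
    have hs1 : 0 < 1 - s := by linarith [hs.2]
    have hs0 := hs.1
    have hsa : s ^ α < 1 := Real.rpow_lt_one hs0.le hs.2 h0
    have hsp : 0 < s ^ α := by positivity
    have := hlt (y * s ^ α) (by nlinarith) (by nlinarith)
    have : 0 < s ^ (α - 1) * mlP α α (y * s ^ α) := by positivity
    exact mul_pos (by linarith) (by positivity)

lemma ml_phi_pos {α : ℝ} (h0 : 0 < α) (h1 : α < 1) : ∀ y ≤ 0, 0 < mlP α α y := by
  by_contra hcon
  push Not at hcon
  obtain ⟨w, hw0, hw⟩ := hcon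
  have hcl : IsClosed {z | mlP α α z ≤ 0} :=
    isClosed_le (ml_continuous h0 h1 h0) continuous_const
  have hcomp : IsCompact (Icc w 0 ∩ {z | mlP α α z ≤ 0}) := isCompact_Icc.inter_right hcl
  obtain ⟨y, ⟨⟨hy1, hy2⟩, hy3⟩, hmax⟩ := hcomp.exists_isGreatest ⟨w, ⟨le_rfl, hw0⟩, hw⟩
  have hz : 0 < mlP α α 0 := by
    have : mlP α α 0 = 1 / Real.Gamma α := by
      unfold mlP
      rw [tsum_eq_single 0 (fun k hk => by simp [hk])]
      simp
    rw [this]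
    exact one_div_pos.2 (Real.Gamma_pos_of_pos h0)
  have hy : y < 0 := lt_of_le_of_ne hy2 (by rintro rfl; exact absurd hz (not_lt.2 hy3))
  refine absurd (ml_phi_step h0 h1 hy fun z hz1 hz2 => ?_) (not_lt.2 hy3)
  by_contra hh
  exact absurd (hmax ⟨⟨hy1.trans hz1.le, hz2⟩, not_lt.1 hh⟩) (not_le.2 hz1)

theorem mittagLeffler_pos_decreasing_le_one (α lam : ℝ) (hα : α ∈ Set.Ioo (0:ℝ) 1)
    (hlam : 0 < lam) :
    ∀ s t : ℝ, 0 ≤ s → s ≤ t →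
      0 < mittagLeffler α (-lam * t ^ α) ∧
      mittagLeffler α (-lam * t ^ α) ≤ mittagLeffler α (-lam * s ^ α) ∧
      mittagLeffler α (-lam * s ^ α) ≤ 1 := by
  obtain ⟨h0, h1⟩ := hα
  intro s t hs hst
  have hE : ∀ y, mittagLeffler α y = mlP α 1 y := fun y => rfl
  simp only [hE]
  have hφ := ml_phi_pos h0 h1
  have hmono : MonotoneOn (mlP α 1) (Iic 0) := by
    refine monotoneOn_of_deriv_nonneg (convex_Iic 0)
      (ml_continuous h0 h1 one_pos).continuousOn
      (fun y _ => (ml_hasDeriv h0 h1 y).differentiableAt.differentiableWithinAt) ?_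
    intro y hy
    rw [(ml_hasDeriv h0 h1 y).deriv]
    exact (div_pos (hφ y (Set.mem_Iic.1 (interior_subset hy))) h0).le
  have hone : mlP α 1 0 = 1 := by
    unfold mlP
    rw [tsum_eq_single 0 (fun k hk => by simp [hk])]
    simp
  have ht : 0 ≤ t := hs.trans hst
  have hsp : 0 ≤ s ^ α := Real.rpow_nonneg hs α
  have htp : 0 ≤ t ^ α := Real.rpow_nonneg ht α
  have hle : s ^ α ≤ t ^ α := Real.rpow_le_rpow hs hst h0.le
  have a1 : -lam * s ^ α ≤ 0 := by nlinarith
  have a2 : -lam * t ^ α ≤ 0 := by nlinarith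
  refine ⟨ml_E_pos h0 h1 hφ a2, hmono a2 a1 (by nlinarith), ?_⟩
  exact (hmono a1 (Set.mem_Iic.2 le_rfl) a1).trans_eq hone
end

section
/- Let α ∈ (0,1). There exists a constant C > 0 (depending only on α) such that for every sequence of real coefficients (c_n)_{n≥1} with Σ_{n=1}^∞ c_n² < ∞, every λ_1 > 0, every sequence of reals (λ_n)_{n≥1} with λ_n ≥ λ_1 for all n, and every t > 0, one has Σ_{n=1}^∞ c_n² λ_n E_α(−λ_n t^α)² ≤ (C² / (λ_1 t^(2α))) Σ_{n=1}^∞ c_n². -/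
/-- Coefficient of `z^n` in `(1-z)^(-b)`. -/
noncomputable def mlA (n : ℕ) (b : ℝ) : ℝ := ∏ j ∈ Finset.range n, (b + j) / (j + 1)

lemma mlA_zero (b : ℝ) : mlA 0 b = 1 := by simp [mlA]

lemma mlA_succ (n : ℕ) (b : ℝ) : mlA (n+1) b = mlA n b * ((b + n) / (n + 1)) := by
  rw [mlA, Finset.prod_range_succ]; rfl

lemma mlA_succ' (n : ℕ) (b : ℝ) : (n + 1 : ℝ) * mlA (n+1) b = (b + n) * mlA n b := by
  rw [mlA_succ]; field_simp

lemma mlA_nonneg (n : ℕ) {b : ℝ} (hb : 0 ≤ b) : 0 ≤ mlA n b := by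
  unfold mlA; positivity

lemma mlA_one (n : ℕ) : mlA n 1 = 1 := by
  induction n with
  | zero => exact mlA_zero 1
  | succ n ih =>
    rw [mlA_succ, ih, one_mul, add_comm]
    exact div_self (by positivity)

lemma mlA_succ_zero (n : ℕ) : mlA (n+1) 0 = 0 := by
  induction n with
  | zero => simp [mlA]
  | succ n ih => rw [mlA_succ, ih, zero_mul]

lemma mlA_neg {a : ℝ} (h0 : 0 ≤ a) (h1 : a ≤ 1) (n : ℕ) : mlA (n+1) (-a) ≤ 0 := by
  induction n with
  | zero => simp [mlA, h0]
  | succ n ih =>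
    rw [mlA_succ]
    apply mul_nonpos_of_nonpos_of_nonneg ih
    push_cast
    have : (0:ℝ) ≤ n := by positivity
    apply div_nonneg <;> linarith

lemma mlA_le (n : ℕ) {b : ℝ} (hb : 0 ≤ b) : mlA n b ≤ (b + 1) ^ n := by
  induction n with
  | zero => simp [mlA]
  | succ n ih =>
    rw [mlA_succ, pow_succ]
    apply mul_le_mul ih _ (by positivity) (by positivity)
    rw [div_le_iff₀ (by positivity)]
    have : (0:ℝ) ≤ n := by positivity
    nlinarith [mul_nonneg hb this]

lemma mlA_conv (b c : ℝ) (n : ℕ) :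
    ∑ p ∈ Finset.HasAntidiagonal.antidiagonal n, mlA p.1 b * mlA p.2 c = mlA n (b + c) := by
  induction n with
  | zero => simp [mlA_zero]
  | succ n ih =>
    have hn : (n + 1 : ℝ) ≠ 0 := by positivity
    apply mul_left_cancel₀ hn
    rw [mlA_succ', ← ih, Finset.mul_sum, Finset.mul_sum]
    have e1 : ∑ p ∈ Finset.HasAntidiagonal.antidiagonal (n+1), (p.1 : ℝ) * (mlA p.1 b * mlA p.2 c)
        = ∑ p ∈ Finset.HasAntidiagonal.antidiagonal n, (b + p.1) * (mlA p.1 b * mlA p.2 c) := by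
      rw [Finset.Nat.antidiagonal_succ, Finset.sum_cons, Finset.sum_map]
      simp only [Nat.cast_zero, zero_mul, zero_add]
      apply Finset.sum_congr rfl
      intro p _
      have := mlA_succ' p.1 b
      simp only [Function.Embedding.prodMap, Function.Embedding.coeFn_mk, Prod.map,
        Function.Embedding.refl_apply, Nat.succ_eq_add_one]
      push_cast
      rw [← mul_assoc, this, mul_assoc]
    have e2 : ∑ p ∈ Finset.HasAntidiagonal.antidiagonal (n+1), (p.2 : ℝ) * (mlA p.1 b * mlA p.2 c)
        = ∑ p ∈ Finset.HasAntidiagonal.antidiagonal n, (c + p.2) * (mlA p.1 b * mlA p.2 c) := by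
      rw [Finset.Nat.antidiagonal_succ', Finset.sum_cons, Finset.sum_map]
      simp only [Nat.cast_zero, zero_mul, zero_add]
      apply Finset.sum_congr rfl
      intro p _
      have := mlA_succ' p.2 c
      simp only [Function.Embedding.prodMap, Function.Embedding.coeFn_mk, Prod.map,
        Function.Embedding.refl_apply, Nat.succ_eq_add_one]
      push_cast
      linear_combination mlA p.1 b * this
    calc _ = ∑ p ∈ Finset.HasAntidiagonal.antidiagonal (n+1), ((p.1 : ℝ) * (mlA p.1 b * mlA p.2 c)
              + (p.2 : ℝ) * (mlA p.1 b * mlA p.2 c)) := by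
            apply Finset.sum_congr rfl
            intro p hp
            have : (p.1 : ℝ) + p.2 = n + 1 := by
              exact_mod_cast Finset.HasAntidiagonal.mem_antidiagonal.mp hp
            rw [← this]; ring
      _ = _ := by
            rw [Finset.sum_add_distrib, e1, e2, ← Finset.sum_add_distrib]
            apply Finset.sum_congr rfl
            intro p hp
            have : (p.1 : ℝ) + p.2 = n := by
              exact_mod_cast Finset.HasAntidiagonal.mem_antidiagonal.mp hp
            rw [← this]; ring

lemma mlA_summable {a c r : ℝ} (ha : 0 ≤ a) (hc : 0 ≤ c) (hr : |r| < 1) (n : ℕ) :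
    Summable (fun k : ℕ => r ^ k * mlA n (c + a * k)) := by
  have h1 : Summable (fun k : ℕ => ((k:ℝ) ^ n * |r| ^ k)) :=
    summable_pow_mul_geometric_of_norm_lt_one n (by simpa using hr)
  have h2 : Summable (fun k : ℕ => |r| ^ k) :=
    summable_geometric_of_lt_one (abs_nonneg r) hr
  have h3 := ((h1.add h2).mul_left ((c + a + 1) ^ n * 2 ^ n))
  apply Summable.of_norm_bounded h3
  intro k
  have hk : (0:ℝ) ≤ k := by positivity
  have hb : 0 ≤ c + a * k := by positivity
  rw [Real.norm_eq_abs, abs_mul, abs_pow, abs_of_nonneg (mlA_nonneg n hb)]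
  have h4 : mlA n (c + a * k) ≤ (c + a + 1) ^ n * 2 ^ n * ((k:ℝ) ^ n + 1) := by
    refine (mlA_le n hb).trans ?_
    have : (c + a * k + 1) ≤ (c + a + 1) * (2 * max (k:ℝ) 1) := by
      have := le_max_left (k:ℝ) 1
      have := le_max_right (k:ℝ) 1
      have := mul_nonneg ha (show 0 ≤ 2 * max (k:ℝ) 1 - k by linarith)
      have := mul_nonneg hc (show 0 ≤ 2 * max (k:ℝ) 1 - 1 by linarith)
      nlinarith
    refine (pow_le_pow_left₀ (by positivity) this n).trans ?_
    rw [mul_pow, mul_pow, ← mul_assoc]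
    apply mul_le_mul_of_nonneg_left _ (by positivity)
    rcases le_total (k:ℝ) 1 with h | h
    · rw [max_eq_right h, one_pow]
      have : (0:ℝ) ≤ (k:ℝ) ^ n := by positivity
      linarith
    · rw [max_eq_left h]; linarith
  calc |r| ^ k * mlA n (c + a * k) ≤ |r| ^ k * ((c + a + 1) ^ n * 2 ^ n * ((k:ℝ) ^ n + 1)) :=
        mul_le_mul_of_nonneg_left h4 (by positivity)
    _ = _ := by ring

/-- Discrete Mittag-Leffler type sums. -/
noncomputable def mlU (a c h : ℝ) (n : ℕ) : ℝ := ∑' k : ℕ, (-h) ^ k * mlA n (c + a * k)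

lemma mlU_conv {a c h : ℝ} (ha : 0 ≤ a) (hc : 0 ≤ c) (hh : |(-h)| < 1) (b : ℝ) (n : ℕ) :
    ∑ p ∈ Finset.HasAntidiagonal.antidiagonal n, mlA p.1 b * mlU a c h p.2 = mlU a (b + c) h n := by
  unfold mlU
  simp_rw [← tsum_mul_left]
  rw [← Summable.tsum_finsetSum]
  · apply tsum_congr
    intro k
    rw [add_assoc, ← mlA_conv, Finset.mul_sum]
    apply Finset.sum_congr rfl
    intro p _
    ring
  · intro p _
    exact (mlA_summable ha hc hh p.2).mul_left _

lemma mlU_shift {a c h : ℝ} (ha : 0 ≤ a) (hc : 0 ≤ c) (hh : |(-h)| < 1) (n : ℕ) :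
    mlU a c h n = mlA n c - h * mlU a (a + c) h n := by
  unfold mlU
  rw [(mlA_summable ha hc hh n).tsum_eq_zero_add, ← tsum_mul_left]
  rw [sub_eq_add_neg, ← tsum_neg]
  congr 1
  · simp
  · apply tsum_congr
    intro k
    rw [show c + a * ((k+1 : ℕ):ℝ) = a + c + a * k by push_cast; ring]
    ring

lemma mlR_nonneg {a h : ℝ} (ha : 0 ≤ a) (ha1 : a ≤ 1) (h0 : 0 ≤ h) (hh : |(-h)| < 1) (n : ℕ) :
    0 ≤ mlU a a h n := by
  induction n using Nat.strong_induction_on with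
  | _ n ih =>
    have e := mlU_conv ha ha hh (-a) n
    rw [neg_add_cancel, mlU_shift ha le_rfl hh, add_zero] at e
    have hd : 0 ≤ mlA n 0 := mlA_nonneg n le_rfl
    have hs : ∑ p ∈ Finset.HasAntidiagonal.antidiagonal n, mlA p.1 (-a) * mlU a a h p.2 ≤ mlU a a h n := by
      cases n with
      | zero => simp [mlA_zero]
      | succ n =>
        rw [Finset.Nat.antidiagonal_succ, Finset.sum_cons, Finset.sum_map]
        simp only [mlA_zero, one_mul]
        have : ∀ p ∈ Finset.HasAntidiagonal.antidiagonal n, mlA (p.1+1) (-a) * mlU a a h p.2 ≤ 0 := by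
          intro p hp
          have := Finset.HasAntidiagonal.mem_antidiagonal.mp hp
          exact mul_nonpos_of_nonpos_of_nonneg (mlA_neg ha ha1 _) (ih _ (by omega))
        have := Finset.sum_nonpos this
        simpa using this
    rw [e] at hs
    by_contra hneg
    push Not at hneg
    nlinarith [mul_nonneg h0 (le_of_lt (neg_pos.mpr hneg))]

lemma mlU_nonneg {a h : ℝ} (ha : 0 ≤ a) (ha1 : a ≤ 1) (h0 : 0 ≤ h) (hh : |(-h)| < 1) (n : ℕ) :
    0 ≤ mlU a 1 h n := by
  have e := mlU_conv ha ha hh (1-a) n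
  rw [sub_add_cancel] at e
  rw [← e]
  apply Finset.sum_nonneg
  intro p _
  exact mul_nonneg (mlA_nonneg _ (by linarith)) (mlR_nonneg ha ha1 h0 hh _)

lemma mlU_anti {a h : ℝ} (ha : 0 ≤ a) (ha1 : a ≤ 1) (h0 : 0 ≤ h) (hh : |(-h)| < 1) :
    Antitone (mlU a 1 h) := by
  apply antitone_nat_of_succ_le
  intro n
  have e : mlU a 1 h (n+1) = mlU a 1 h n + mlU a 0 h (n+1) := by
    have e1 := mlU_conv ha le_rfl hh 1 (n+1)
    have e2 := mlU_conv ha le_rfl hh 1 n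
    simp only [mlA_one, one_mul, add_zero] at e1 e2
    rw [Finset.Nat.antidiagonal_succ, Finset.sum_cons, Finset.sum_map] at e1
    simp only [Function.Embedding.prodMap, Function.Embedding.coeFn_mk, Prod.map,
        Function.Embedding.refl_apply] at e1
    rw [e2] at e1
    linarith
  rw [e, mlU_shift ha le_rfl hh, mlA_succ_zero, add_zero]
  nlinarith [mul_nonneg h0 (mlR_nonneg ha ha1 h0 hh (n+1))]

lemma mlU_bound {a h : ℝ} (ha : 0 ≤ a) (ha1 : a ≤ 1) (h0 : 0 ≤ h) (hh : |(-h)| < 1) (n : ℕ) :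
    mlU a 1 h n * (h * mlA n (1 + a)) ≤ 1 := by
  have e := mlU_shift ha zero_le_one hh n
  have e2 := mlU_conv ha zero_le_one hh a n
  have e3 := mlA_conv a 1 n
  rw [mlA_one] at e
  simp only [mlA_one, mul_one] at e3
  have : mlA n (1 + a) * mlU a 1 h n ≤ mlU a (a+1) h n := by
    rw [← e2, add_comm 1 a, ← e3, Finset.sum_mul]
    apply Finset.sum_le_sum
    intro p hp
    have := Finset.HasAntidiagonal.mem_antidiagonal.mp hp
    exact mul_le_mul_of_nonneg_left (mlU_anti ha ha1 h0 hh (by omega)) (mlA_nonneg _ ha)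
  have h1 := mul_le_mul_of_nonneg_left this h0
  have h2 := mlU_nonneg ha ha1 h0 hh n
  nlinarith

lemma ml_ratio_anti {y : ℝ} (hy : 0 ≤ y) {N n : ℕ} (hN : 1 ≤ N) (hn : N ≤ n) :
    mlA n (1 + y) / (n:ℝ) ^ y ≤ mlA N (1 + y) / (N:ℝ) ^ y := by
  induction n, hn using Nat.le_induction with
  | base => exact le_rfl
  | succ n hn ih =>
    refine le_trans ?_ ih
    have hn0 : (0:ℝ) < n := by exact_mod_cast (by omega : 0 < n)
    have hn1 : (0:ℝ) < (n:ℝ) + 1 := by positivity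
    rw [mlA_succ]
    push_cast
    rw [div_le_div_iff₀ (by positivity) (by positivity), mul_assoc]
    apply mul_le_mul_of_nonneg_left _ (mlA_nonneg n (by linarith))
    have hlog : 1 / ((n:ℝ) + 1) ≤ Real.log ((n + 1) / n) := by
      have := Real.one_sub_inv_le_log_of_pos (show 0 < ((n:ℝ)+1)/n by positivity)
      refine le_trans (le_of_eq ?_) this
      field_simp
      ring
    have h1 : (1 + y + n) / ((n:ℝ) + 1) ≤ (((n:ℝ) + 1) / n) ^ y := by
      rw [Real.rpow_def_of_pos (by positivity)]
      refine le_trans ?_ (Real.add_one_le_exp _)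
      have := mul_le_mul_of_nonneg_right hlog hy
      refine le_trans (le_of_eq ?_) (add_le_add_left this 1)
      field_simp
      ring
    rw [Real.div_rpow (by positivity) (by positivity), le_div_iff₀ (by positivity)] at h1
    exact h1

lemma ml_ratio_tendsto {y : ℝ} (hy : 0 ≤ y) :
    Filter.Tendsto (fun n : ℕ => mlA n (1 + y) / (n:ℝ) ^ y) Filter.atTop
      (nhds (1 / Real.Gamma (y + 1))) := by
  rcases hy.eq_or_lt with rfl | hy
  · simp [mlA_one]
  have h := Real.GammaSeq_tendsto_Gamma y
  have hG := Real.Gamma_pos_of_pos hy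
  have h2 := (h.const_mul y).inv₀ (by positivity)
  rw [Real.Gamma_add_one hy.ne', one_div]
  refine h2.congr ?_
  intro n
  have e : y * ∏ j ∈ Finset.range n, (1 + y + j) = ∏ j ∈ Finset.range (n+1), (y + j) := by
    rw [Finset.prod_range_succ']
    simp only [Nat.cast_zero, add_zero]
    rw [mul_comm]
    congr 1
    apply Finset.prod_congr rfl
    intro j _
    push_cast; ring
  have e2 : (n.factorial : ℝ) = ∏ j ∈ Finset.range n, ((j:ℝ) + 1) := by
    rw [← Finset.prod_range_add_one_eq_factorial]; push_cast; rfl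
  unfold Real.GammaSeq mlA
  rw [← e, Finset.prod_div_distrib, ← e2]
  have : ∏ j ∈ Finset.range n, (1 + y + (j:ℝ)) ≠ 0 :=
    (Finset.prod_pos (fun j _ => by positivity)).ne'
  field_simp

lemma ml_bound {a x : ℝ} (ha : 0 < a) (ha1 : a < 1) (hx : 0 < x) :
    0 ≤ mittagLeffler a (-x) ∧ mittagLeffler a (-x) * x ≤ Real.Gamma (1 + a) := by
  have hto : Filter.Tendsto (fun n : ℕ => x / (n:ℝ) ^ a) Filter.atTop (nhds 0) :=
    ((tendsto_rpow_atTop ha).comp tendsto_natCast_atTop_atTop).const_div_atTop x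
  have hev : ∀ᶠ n : ℕ in Filter.atTop, |(-(x / (n:ℝ) ^ a))| < 1 := by
    filter_upwards [hto.eventually_lt_const one_pos] with n hn
    rw [abs_neg, abs_of_nonneg (by positivity)]
    exact hn
  obtain ⟨N, hN1, hNlt⟩ : ∃ N : ℕ, 1 ≤ N ∧ |x / (N:ℝ) ^ a| < 1 := by
    obtain ⟨N, h1, h2⟩ := (hev.and (Filter.eventually_ge_atTop 1)).exists
    exact ⟨N, h2, by rwa [abs_neg] at h1⟩
  have key : ∀ (n k : ℕ) (z : ℝ), (z / (n:ℝ) ^ a) ^ k * mlA n (1 + a * k)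
      = z ^ k * (mlA n (1 + a * k) / (n:ℝ) ^ (a * k)) := by
    intro n k z
    rw [div_pow, Real.rpow_mul (by positivity), Real.rpow_natCast]
    ring
  have hU : Filter.Tendsto (fun n : ℕ => mlU a 1 (x / (n:ℝ) ^ a) n) Filter.atTop
      (nhds (mittagLeffler a (-x))) := by
    unfold mlU mittagLeffler
    apply tendsto_tsum_of_dominated_convergence (mlA_summable ha.le zero_le_one hNlt N)
    · intro k
      simp_rw [← neg_div, key]
      rw [div_eq_mul_one_div]
      exact (ml_ratio_tendsto (by positivity)).const_mul _
    · filter_upwards [Filter.eventually_ge_atTop N] with n hn k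
      have hA : ∀ m : ℕ, 0 ≤ mlA m (1 + a * k) := fun m => mlA_nonneg m (by positivity)
      rw [← neg_div, key, key, norm_mul, norm_pow, norm_neg, Real.norm_of_nonneg hx.le,
        Real.norm_of_nonneg (div_nonneg (hA n) (by positivity))]
      exact mul_le_mul_of_nonneg_left (ml_ratio_anti (by positivity) hN1 hn) (by positivity)
  constructor
  · apply ge_of_tendsto hU
    filter_upwards [hev] with n hn
    exact mlU_nonneg ha.le ha1.le (by positivity) hn n
  · have h1 := hU.mul ((ml_ratio_tendsto ha.le).const_mul x)
    have h2 : mittagLeffler a (-x) * (x * (1 / Real.Gamma (a + 1))) ≤ 1 := by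
      apply le_of_tendsto h1
      filter_upwards [hev] with n hn
      have := mlU_bound ha.le ha1.le (by positivity) hn n
      refine le_trans (le_of_eq ?_) this
      ring
    have hG : 0 < Real.Gamma (a + 1) := Real.Gamma_pos_of_pos (by linarith)
    rw [← mul_assoc, mul_one_div, div_le_one hG] at h2
    rwa [add_comm 1 a]

theorem series_bound_lambda (α : ℝ) (hα : α ∈ Set.Ioo (0:ℝ) 1) :
    ∃ C : ℝ, 0 < C ∧ ∀ (c lam : ℕ → ℝ) (lam1 : ℝ), Summable (fun n => (c n) ^ 2) →
      0 < lam1 → (∀ n, lam1 ≤ lam n) → ∀ t : ℝ, 0 < t →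
      Summable (fun n => (c n) ^ 2 * lam n *
        (mittagLeffler α (-(lam n) * t ^ α)) ^ 2) ∧
      ∑' n, (c n) ^ 2 * lam n * (mittagLeffler α (-(lam n) * t ^ α)) ^ 2 ≤
        (C ^ 2 / (lam1 * t ^ (2 * α))) * ∑' n, (c n) ^ 2 := by
  obtain ⟨h0, h1⟩ := hα
  refine ⟨Real.Gamma (1 + α), Real.Gamma_pos_of_pos (by linarith), ?_⟩
  intro c lam lam1 hc hl1 hl t ht
  set C := Real.Gamma (1 + α)
  have hT : 0 < t ^ α := by positivity
  have hT2 : t ^ (2 * α) = (t ^ α) ^ 2 := by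
    rw [mul_comm, Real.rpow_mul ht.le]; norm_cast
  have hterm : ∀ n, (c n) ^ 2 * lam n * (mittagLeffler α (-(lam n) * t ^ α)) ^ 2 ≤
      (C ^ 2 / (lam1 * t ^ (2 * α))) * (c n) ^ 2 := by
    intro n
    have hln : 0 < lam n := hl1.trans_le (hl n)
    obtain ⟨hE0, hE⟩ := ml_bound h0 h1 (mul_pos hln hT)
    rw [neg_mul]
    set E := mittagLeffler α (-(lam n * t ^ α))
    have hsq : (E * (lam n * t ^ α)) ^ 2 ≤ C ^ 2 := pow_le_pow_left₀ (by positivity) hE 2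
    have : lam n * E ^ 2 ≤ C ^ 2 / (lam1 * t ^ (2 * α)) := by
      rw [hT2, le_div_iff₀ (by positivity)]
      refine le_trans ?_ hsq
      calc lam n * E ^ 2 * (lam1 * (t ^ α) ^ 2) ≤ lam n * E ^ 2 * (lam n * (t ^ α) ^ 2) := by
            gcongr; exact hl n
        _ = _ := by ring
    calc _ = (c n)^2 * (lam n * E ^ 2) := by ring
      _ ≤ (c n)^2 * (C ^ 2 / (lam1 * t ^ (2 * α))) := by gcongr
      _ = _ := by ring
  have hs := hc.mul_left (C ^ 2 / (lam1 * t ^ (2 * α)))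
  have hsum : Summable (fun n => (c n) ^ 2 * lam n *
        (mittagLeffler α (-(lam n) * t ^ α)) ^ 2) := by
    refine Summable.of_nonneg_of_le (fun n => ?_) hterm hs
    have hln : 0 < lam n := hl1.trans_le (hl n)
    positivity
  refine ⟨hsum, ?_⟩
  rw [← tsum_mul_left]
  exact hsum.tsum_le_tsum hterm hs
end

section
/- Let α ∈ (0,1), λ > 0, and T > 0. If η : [0,T] → ℝ is continuous and satisfies η(t) = 1 − (λ/Γ(α)) ∫_0^t (t−s)^(α−1) η(s) ds for every t ∈ [0,T], then η(t) = E_α(−λ t^α) for every t ∈ [0,T]; that is, the fractional initial value problem with Caputo derivative of order α, right-hand side −λη, and initial value η(0) = 1 has a unique solution, given by the Mittag-Leffler function. -/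
/-- Real scaled Beta integral. -/
lemma vol_beta {a b t : ℝ} (ha : 0 < a) (hb : 0 < b) (ht : 0 < t) :
    ∫ s in (0:ℝ)..t, (t - s) ^ (a - 1) * s ^ (b - 1) =
      t ^ (a + b - 1) * (Real.Gamma a * Real.Gamma b / Real.Gamma (a + b)) := by
  have h := Complex.betaIntegral_scaled (b : ℂ) (a : ℂ) ht
  rw [Complex.betaIntegral_eq_Gamma_mul_div _ _ (by simpa using hb) (by simpa using ha)] at h
  have h1 : ∫ x in (0:ℝ)..t, (x : ℂ) ^ ((b:ℂ) - 1) * ((t : ℂ) - x) ^ ((a:ℂ) - 1)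
      = ∫ x in (0:ℝ)..t, (((t - x) ^ (a - 1) * x ^ (b - 1) : ℝ) : ℂ) := by
    apply intervalIntegral.integral_congr
    intro x hx
    rw [Set.uIcc_of_le ht.le] at hx
    simp only [Complex.ofReal_mul]
    rw [Complex.ofReal_cpow (sub_nonneg.2 hx.2), Complex.ofReal_cpow hx.1]
    push_cast
    ring
  rw [h1, intervalIntegral.integral_ofReal, ← Complex.ofReal_add b a, Complex.Gamma_ofReal,
    Complex.Gamma_ofReal, Complex.Gamma_ofReal] at h
  have h2 : ((t:ℂ) ^ (((b + a : ℝ) : ℂ) - 1)) = ((t ^ (b + a - 1) : ℝ) : ℂ) := by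
    rw [Complex.ofReal_cpow ht.le]
    push_cast
    ring_nf
  rw [h2] at h
  have h3 : ∫ s in (0:ℝ)..t, (t - s) ^ (a - 1) * s ^ (b - 1) =
      t ^ (b + a - 1) * (Real.Gamma b * Real.Gamma a / Real.Gamma (b + a)) := by
    exact_mod_cast h
  rw [h3, add_comm b a, mul_comm (Real.Gamma b)]

/-- The fractional integral of a monomial. -/
lemma vol_frac {α t : ℝ} (hα : 0 < α) (ht : 0 ≤ t) (k : ℕ) :
    ∫ s in (0:ℝ)..t, (t - s) ^ (α - 1) * ((s ^ α) ^ k / Real.Gamma (α * k + 1)) =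
      Real.Gamma α * ((t ^ α) ^ (k + 1) / Real.Gamma (α * ((k + 1 : ℕ) : ℝ) + 1)) := by
  rcases ht.eq_or_lt with rfl | ht
  · simp [Real.zero_rpow hα.ne']
  have hk : 0 < α * k + 1 := by positivity
  have h1 : ∫ s in (0:ℝ)..t, (t - s) ^ (α - 1) * ((s ^ α) ^ k / Real.Gamma (α * k + 1)) =
      ∫ s in (0:ℝ)..t, ((t - s) ^ (α - 1) * s ^ ((α * k + 1) - 1)) * (Real.Gamma (α * k + 1))⁻¹ := by
    apply intervalIntegral.integral_congr
    intro x hx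
    rw [Set.uIcc_of_le ht.le] at hx
    simp only
    rw [add_sub_cancel_right, Real.rpow_mul hx.1, Real.rpow_natCast]
    ring
  rw [h1, intervalIntegral.integral_mul_const, vol_beta hα hk ht]
  have e1 : α + (α * k + 1) - 1 = α * ((k + 1 : ℕ) : ℝ) := by push_cast; ring
  have e2 : α + (α * k + 1) = α * ((k + 1 : ℕ) : ℝ) + 1 := by push_cast; ring
  rw [e1, e2, Real.rpow_mul ht.le, Real.rpow_natCast]
  have := (Real.Gamma_pos_of_pos hk).ne'
  field_simp

/-- Lower bound for the Gamma function. -/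
lemma vol_gamma_lower {R y : ℝ} (hR : 0 < R) (hy : 0 ≤ y) :
    R ^ y * Real.exp (-R) ≤ Real.Gamma (y + 1) := by
  have hy1 : 0 < y + 1 := by linarith
  have hint := Real.GammaIntegral_convergent hy1
  rw [Real.Gamma_eq_integral hy1, ← integral_exp_neg_Ioi R, ← MeasureTheory.integral_const_mul]
  have hsub : Set.Ioi R ⊆ Set.Ioi 0 := Set.Ioi_subset_Ioi hR.le
  calc _ ≤ ∫ x in Set.Ioi R, Real.exp (-x) * x ^ (y + 1 - 1) := by
        apply MeasureTheory.setIntegral_mono_on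
        · exact (integrableOn_exp_neg_Ioi R).const_mul _
        · exact hint.mono_set hsub
        · exact measurableSet_Ioi
        · intro x hx
          rw [add_sub_cancel_right, mul_comm]
          gcongr
          exact le_of_lt hx
    _ ≤ _ := by
        apply MeasureTheory.setIntegral_mono_set hint
        · filter_upwards [MeasureTheory.ae_restrict_mem measurableSet_Ioi] with x hx
          have : (0:ℝ) < x := hx
          simp only [Pi.zero_apply]
          positivity
        · exact hsub.eventuallyLE

lemma vol_summable {α : ℝ} (hα : 0 < α) (x : ℝ) :
    Summable (fun k : ℕ => x ^ k / Real.Gamma (α * k + 1)) := by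
  set c : ℝ := 2 * |x| + 1 with hc
  have hc0 : 0 < c := by positivity
  set R : ℝ := c ^ (α⁻¹) with hRdef
  have hR : 0 < R := by positivity
  have hRα : R ^ α = c := by
    rw [hRdef, ← Real.rpow_mul hc0.le, inv_mul_cancel₀ hα.ne', Real.rpow_one]
  have hgeo : Summable (fun k : ℕ => Real.exp R * (|x| / c) ^ k) := by
    apply Summable.mul_left
    apply summable_geometric_of_lt_one (by positivity)
    rw [div_lt_one hc0]
    have := abs_nonneg x
    linarith
  refine Summable.of_norm_bounded hgeo fun k => ?_
  have hk : 0 ≤ α * k := by positivity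
  have hg := vol_gamma_lower hR hk
  rw [Real.rpow_mul hR.le, hRα, Real.rpow_natCast] at hg
  have hpos : 0 < Real.Gamma (α * k + 1) := Real.Gamma_pos_of_pos (by linarith)
  rw [norm_div, norm_pow, Real.norm_eq_abs, Real.norm_of_nonneg hpos.le]
  calc |x| ^ k / Real.Gamma (α * k + 1) ≤ |x| ^ k / (c ^ k * Real.exp (-R)) := by
        gcongr
    _ = _ := by
        rw [Real.exp_neg, div_pow]
        have := Real.exp_pos R
        field_simp

lemma vol_kernel_int {α t : ℝ} (hα : 0 < α) :
    IntervalIntegrable (fun s => (t - s) ^ (α - 1)) MeasureTheory.volume 0 t := by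
  have h := (intervalIntegral.intervalIntegrable_rpow' (a := 0) (b := t)
    (r := α - 1) (by linarith)).comp_sub_left t
  simpa using h.symm

theorem volterra_equation_unique_solution (α lam T : ℝ) (hα : α ∈ Set.Ioo (0:ℝ) 1)
    (hlam : 0 < lam) (hT : 0 < T) (η : ℝ → ℝ)
    (hcont : ContinuousOn η (Set.Icc 0 T))
    (heq : ∀ t ∈ Set.Icc (0:ℝ) T,
      η t = 1 - (lam / Real.Gamma α) *
        ∫ s in (0:ℝ)..t, (t - s) ^ (α - 1) * η s) :
    ∀ t ∈ Set.Icc (0:ℝ) T, η t = mittagLeffler α (-lam * t ^ α) := by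
  have hα0 : 0 < α := hα.1
  have hΓ : 0 < Real.Gamma α := Real.Gamma_pos_of_pos hα0
  obtain ⟨M, hM⟩ := isCompact_Icc.exists_bound_of_continuousOn hcont
  let p : ℕ → ℝ → ℝ := fun k s => (s ^ α) ^ k / Real.Gamma (α * k + 1)
  have hpc : ∀ k, Continuous (p k) := fun k =>
    ((Real.continuous_rpow_const hα0.le).pow k).div_const _
  have hfrac : ∀ t, 0 ≤ t → ∀ k, ∫ s in (0:ℝ)..t, (t - s) ^ (α - 1) * p k s =
      Real.Gamma α * p (k + 1) t := fun t ht k => vol_frac hα0 ht k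
  let S : ℕ → ℝ → ℝ := fun n s => ∑ k ∈ Finset.range n, (-lam) ^ k * p k s
  have hSc : ∀ n, Continuous (S n) := fun n =>
    continuous_finsetSum _ fun k _ => continuous_const.mul (hpc k)
  have hSrec : ∀ n t, 0 ≤ t → S (n + 1) t = 1 - (lam / Real.Gamma α) *
      ∫ s in (0:ℝ)..t, (t - s) ^ (α - 1) * S n s := by
    intro n t ht
    have h1 : ∫ s in (0:ℝ)..t, (t - s) ^ (α - 1) * S n s =
        ∑ k ∈ Finset.range n, (-lam) ^ k * (Real.Gamma α * p (k + 1) t) := by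
      simp_rw [← hfrac t ht, ← intervalIntegral.integral_const_mul]
      rw [← intervalIntegral.integral_finsetSum]
      · congr 1
        ext s
        simp only [S, Finset.mul_sum]
        exact Finset.sum_congr rfl fun k _ => by ring
      · intro k _
        exact ((vol_kernel_int hα0).mul_continuousOn (hpc k).continuousOn).const_mul _
    rw [h1]
    simp only [S]
    rw [Finset.sum_range_succ', Finset.mul_sum, sub_eq_add_neg, ← Finset.sum_neg_distrib, add_comm]
    congr 1
    · simp [p]
    · refine Finset.sum_congr rfl fun k _ => ?_
      field_simp
      ring
  have key : ∀ n, ∀ t ∈ Set.Icc (0:ℝ) T, |η t - S n t| ≤ M * (lam ^ n * p n t) := by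
    intro n
    induction n with
    | zero =>
      intro t ht
      simpa [S, p] using hM t ht
    | succ n ih =>
      intro t ht
      have hηc : ContinuousOn η (Set.uIcc 0 t) := by
        rw [Set.uIcc_of_le ht.1]
        exact hcont.mono (Set.Icc_subset_Icc_right ht.2)
      have e : η t - S (n + 1) t = -(lam / Real.Gamma α) *
          ∫ s in (0:ℝ)..t, (t - s) ^ (α - 1) * (η s - S n s) := by
        rw [heq t ht, hSrec n t ht.1]
        simp_rw [mul_sub]
        rw [intervalIntegral.integral_sub ((vol_kernel_int hα0).mul_continuousOn hηc)
          ((vol_kernel_int hα0).mul_continuousOn (hSc n).continuousOn)]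
        ring
      have hb : |∫ s in (0:ℝ)..t, (t - s) ^ (α - 1) * (η s - S n s)| ≤
          ∫ s in (0:ℝ)..t, (M * lam ^ n) * ((t - s) ^ (α - 1) * p n s) := by
        rw [← Real.norm_eq_abs]
        apply intervalIntegral.norm_integral_le_of_norm_le ht.1
        · refine Filter.Eventually.of_forall fun s hs => ?_
          have hs0 : 0 ≤ (t - s) ^ (α - 1) := Real.rpow_nonneg (sub_nonneg.2 hs.2) _
          rw [norm_mul, Real.norm_of_nonneg hs0, Real.norm_eq_abs]
          calc _ ≤ (t - s) ^ (α - 1) * (M * (lam ^ n * p n s)) :=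
                mul_le_mul_of_nonneg_left (ih s ⟨hs.1.le, hs.2.trans ht.2⟩) hs0
            _ = _ := by ring
        · exact ((vol_kernel_int hα0).mul_continuousOn (hpc n).continuousOn).const_mul _
      rw [intervalIntegral.integral_const_mul, hfrac t ht.1] at hb
      have hc : 0 < lam / Real.Gamma α := div_pos hlam hΓ
      rw [e, abs_mul, abs_neg, abs_of_pos hc]
      calc _ ≤ (lam / Real.Gamma α) * (M * lam ^ n * (Real.Gamma α * p (n + 1) t)) :=
            mul_le_mul_of_nonneg_left hb hc.le
        _ = _ := by
            field_simp
            ring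
  intro t ht
  have hs1 := vol_summable hα0 (-lam * t ^ α)
  have hs2 := vol_summable hα0 (lam * t ^ α)
  have t1 : Filter.Tendsto (fun n => S n t) Filter.atTop
      (nhds (mittagLeffler α (-lam * t ^ α))) := by
    refine hs1.hasSum.tendsto_sum_nat.congr fun n => ?_
    refine Finset.sum_congr rfl fun k _ => ?_
    simp only [p]
    rw [mul_pow, mul_div_assoc]
  have t2 : Filter.Tendsto (fun n => M * (lam ^ n * p n t)) Filter.atTop (nhds 0) := by
    have := hs2.tendsto_atTop_zero.const_mul M
    rw [mul_zero] at this
    refine this.congr fun n => ?_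
    simp only [p]
    rw [mul_pow, mul_div_assoc]
  have t3 : Filter.Tendsto (fun n => η t - S n t) Filter.atTop (nhds 0) :=
    squeeze_zero_norm (fun n => key n t ht) t2
  have t4 := tendsto_nhds_unique t3 (tendsto_const_nhds.sub t1)
  linarith
end
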